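/- Let r,q ≥ 1 with rq > 1, and let μ_{rq}(i) := #{ j : i_j = i } be the Morse counts of σ_{rq}. Then μ_{rq}(i) = μ_{qr}(i) for all i ≥ 0, and μ_{rq}(i) = μ_{rq}(r+q−1−i) for all integers i with 0 ≤ i < r+q. -/

import Mathlib

/-- Morse numbers `i_j` of a permutation `σ` of `{1,…,N}` (extended to `ℕ`),
via the recursion `i_1 = 0`,
`i_{j+1} = i_j + (-1)^(j+1) * sign (σ⁻¹(j+1) - σ⁻¹(j))`. -/
def morse (σ : Equiv.Perm ℕ) : ℕ → ℤ
  | 0 => 0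
  | 1 => 0
  | (j+2) => morse σ (j+1) +
      (-1)^(j+2) * Int.sign ((σ.symm (j+2) : ℤ) - (σ.symm (j+1) : ℤ))

/-- Zero numbers `z_{j k}`, recursion in the first index `j`, second index `k` fixed:
`z_{1k} = 0`, `z_{kk} = i_k`, `z_{k+1,k} = min (i_k, i_{k+1})`, and otherwise
`z_{j+1,k} = z_{jk} + ((-1)^(j+1)/2) * (sign (σ⁻¹(j+1) - σ⁻¹(k)) - sign (σ⁻¹(j) - σ⁻¹(k)))`. -/
def zrec (σ : Equiv.Perm ℕ) (k : ℕ) : ℕ → ℤ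
  | 0 => 0
  | 1 => 0
  | (j+2) =>
      if j+2 = k then morse σ k
      else if j+1 = k then min (morse σ k) (morse σ (k+1))
      else zrec σ k (j+1) +
        ((-1)^(j+2) * (Int.sign ((σ.symm (j+2) : ℤ) - (σ.symm k : ℤ))
          - Int.sign ((σ.symm (j+1) : ℤ) - (σ.symm k : ℤ)))) / 2

/-- The zero number `z_{m n}`. -/
def zfun (σ : Equiv.Perm ℕ) (m n : ℕ) : ℤ := zrec σ n m

/-- The connection digraph of a dissipative Morse permutation `σ` of `{1,…,N}`:
an edge `m ⤳ n` iff `i_m = i_n + 1` and no `w` strictly between `m` and `n`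
blocks, i.e. satisfies `z_{mw} = z_{wn} = z_{mn}`. -/
def hasEdge (N : ℕ) (σ : Equiv.Perm ℕ) (m n : ℕ) : Prop :=
  1 ≤ m ∧ m ≤ N ∧ 1 ≤ n ∧ n ≤ N ∧
  morse σ m = morse σ n + 1 ∧
  ¬ ∃ w : ℕ, min m n < w ∧ w < max m n ∧
      zfun σ m w = zfun σ w n ∧ zfun σ w n = zfun σ m n

/-- A dissipative permutation of `{1,…,N}`. -/
def Dissipative (N : ℕ) (σ : Equiv.Perm ℕ) : Prop :=
  Set.BijOn σ (Set.Icc 1 N) (Set.Icc 1 N) ∧ σ 1 = 1 ∧ σ N = N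

/-- The Morse property: all Morse numbers are nonnegative. -/
def MorseProp (N : ℕ) (σ : Equiv.Perm ℕ) : Prop :=
  ∀ j, 1 ≤ j → j ≤ N → 0 ≤ morse σ j

/-- Morse counts `μ(i) = #{j ∈ {1,…,N} : i_j = i}`. -/
def morseCount (N : ℕ) (σ : Equiv.Perm ℕ) (i : ℤ) : ℕ :=
  ((Finset.Icc 1 N).filter (fun j => morse σ j = i)).card

/-- The primitive 3-nose permutation `σ_{rq}` of `{1,…,N}`, `N = 2(r+1)(q+1)-1`,
characterized by its defining relations, extended to a permutation of `ℕ`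
fixing everything outside `{1,…,N}`. -/
def SigmaRQ (r q : ℕ) (σ : Equiv.Perm ℕ) : Prop :=
  (∀ a, a ∉ Set.Icc 1 (2*(r+1)*(q+1) - 1) → σ a = a) ∧
  (∀ j k, j ≤ r → k ≤ q →
    σ (2*((q+1)*j+k)+1) = 2*(j+(r+1)*k)+1) ∧
  (∀ j k, j ≤ r → k ≤ q → ¬(j = 0 ∧ k = 0) →
    σ (2*((q+1)*(r-j)+(q-k)+1)) = 2*(j+(r+1)*k))

/-- Tags `A`, `B` of equilibrium labels `A^j_k`, `B^j_k`. -/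
inductive Tag | A | B
deriving DecidableEq

/-- The axis position (`h_1`-position) of the label `L^j_k` for parameters `(r,q)`. -/
def axisPos (r q : ℕ) : Tag → ℕ → ℕ → ℕ
  | Tag.A, j, k => if Odd j then (q+1)*(j-1)+k+1 else (q+1)*(2*r+1-j)+(q-k)+1
  | Tag.B, j, k => if Odd j then (q+1)*j+(q-k)+1 else (q+1)*(2*r-j)+k+1

/-- The meander position (`h_0`-position) of the label `L^j_k` for parameters `(r,q)`. -/
def meanderPos (r q : ℕ) : Tag → ℕ → ℕ → ℕ
  | Tag.A, j, k => if Odd k then (r+1)*(2*q+1-k)+(2*r+1-j) else (r+1)*k+j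
  | Tag.B, j, k => if Odd k then (r+1)*(2*q+1-k)+j else (r+1)*(k+1)+(r-j)

/-- The suspension `σ̃` of a dissipative permutation `σ` of `{1,…,N}`:
`σ̃(1) = 1`, `σ̃(N+2) = N+2`, and `σ̃(a+1) = N+2 - σ(a)` for `1 ≤ a ≤ N`. -/
def IsSuspension (N : ℕ) (σ σt : Equiv.Perm ℕ) : Prop :=
  σt 1 = 1 ∧ σt (N+2) = N+2 ∧ ∀ a, 1 ≤ a → a ≤ N → σt (a+1) = N+2 - σ a

/-- The label `A^0_0` is the distinguished (formal) vertex `⋆`. -/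
def IsStar (L : Tag) (j k : ℕ) : Prop := L = Tag.A ∧ j = 0 ∧ k = 0

/-- Tag swap `A ↔ B`, used by the reversor. -/
def tagSwap : Tag → Tag
  | Tag.A => Tag.B
  | Tag.B => Tag.A

/-- Closed form of the Morse number at position `n + (2r+2)k`. -/
def Wval (r q k n : ℕ) : ℤ :=
  if 2*k ≤ q then 2*(k:ℤ) + min ((n:ℤ)-1) (2*r+1-n)
  else 2*((q:ℤ)-k) + min ((n:ℤ)+1) (2*r+1-n)

lemma morse_succ (σ : Equiv.Perm ℕ) (p : ℕ) (hp : 1 ≤ p) :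
    morse σ (p+1) = morse σ p +
      (-1)^(p+1) * Int.sign ((σ.symm (p+1) : ℤ) - (σ.symm p : ℤ)) := by
  obtain ⟨m, rfl⟩ : ∃ m, p = m+1 := ⟨p-1, by omega⟩
  rfl

lemma symm_odd {r q : ℕ} {σ : Equiv.Perm ℕ} (hσ : SigmaRQ r q σ) (j k p : ℕ)
    (hj : j ≤ r) (hk : k ≤ q) (hp : p = (2*j+1) + (2*r+2)*k) :
    (σ.symm p : ℤ) = 2*(((q:ℤ)+1)*j+k)+1 := by
  have h := hσ.2.1 j k hj hk
  have : p = σ (2*((q+1)*j+k)+1) := by rw [h, hp]; ring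
  rw [this, Equiv.symm_apply_apply]; push_cast; ring

lemma symm_even {r q : ℕ} {σ : Equiv.Perm ℕ} (hσ : SigmaRQ r q σ) (j k p : ℕ)
    (hj : j ≤ r) (hk : k ≤ q) (h0 : ¬ (j = 0 ∧ k = 0)) (hp : p = (2*j) + (2*r+2)*k) :
    (σ.symm p : ℤ) = 2*(((q:ℤ)+1)*(r-j)+(q-k)+1) := by
  have h := hσ.2.2 j k hj hk h0
  have : p = σ (2*((q+1)*(r-j)+(q-k)+1)) := by rw [h, hp]; ring
  rw [this, Equiv.symm_apply_apply]; push_cast [hj, hk]; ring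

lemma sign_aux (r q k n : ℕ) (hk : k ≤ q) :
    Int.sign (2*(((q:ℤ)+1)*((n:ℤ)-r)+2*k-q)-1)
      = if n < r ∨ (n = r ∧ 2*k ≤ q) then -1 else 1 := by
  split_ifs with h
  · apply Int.sign_eq_neg_one_of_neg
    rcases h with h | ⟨h, h'⟩
    · have : ((n:ℤ)-r) ≤ -1 := by omega
      nlinarith
    · subst h
      simp; omega
  · apply Int.sign_eq_one_of_pos
    push Not at h
    rcases Nat.lt_or_eq_of_le h.1 with h1 | h1
    · have : ((n:ℤ)-r) ≥ 1 := by omega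
      nlinarith
    · have := h.2 h1.symm
      subst h1
      simp; omega

lemma step_in {r q : ℕ} {σ : Equiv.Perm ℕ} (hσ : SigmaRQ r q σ) (k n : ℕ)
    (hk : k ≤ q) (hn : n < 2*r+1) (h1 : 1 ≤ n + (2*r+2)*k)
    (ih : morse σ (n + (2*r+2)*k) = Wval r q k n) :
    morse σ (n + 1 + (2*r+2)*k) = Wval r q k (n+1) := by
  have hs := morse_succ σ _ h1
  have e : n + 1 + (2*r+2)*k = n + (2*r+2)*k + 1 := by ring
  have hsg := sign_aux r q k n hk
  have key : (-1:ℤ)^(n + (2*r+2)*k + 1) * Int.sign ((σ.symm (n + (2*r+2)*k + 1) : ℤ)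
      - (σ.symm (n + (2*r+2)*k) : ℤ))
      = - Int.sign (2*(((q:ℤ)+1)*((n:ℤ)-r)+2*k-q)-1) := by
    rcases Nat.even_or_odd' n with ⟨j, hj | hj⟩
    · have h0 : ¬ (j = 0 ∧ k = 0) := by
        rintro ⟨rfl, rfl⟩; simp at hj; subst hj; simp at h1
      rw [symm_odd hσ j k _ (by omega) hk (by rw [hj]; ring),
        symm_even hσ j k (n + (2*r+2)*k) (by omega) hk h0 (by rw [hj]),
        Odd.neg_one_pow ⟨j + (r+1)*k, by rw [hj]; ring⟩, neg_one_mul]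
      congr 2
      rw [hj]; push_cast; ring
    · rw [symm_even hσ (j+1) k _ (by omega) hk (by omega) (by rw [hj]; ring),
        symm_odd hσ j k (n + (2*r+2)*k) (by omega) hk (by rw [hj]),
        Even.neg_one_pow ⟨j + 1 + (r+1)*k, by rw [hj]; ring⟩, one_mul, ← Int.sign_neg]
      congr 1
      rw [hj]; push_cast; ring
  rw [e, hs, key, hsg, ih]
  unfold Wval
  push_cast
  split_ifs <;> omega

lemma step_wrap {r q : ℕ} {σ : Equiv.Perm ℕ} (hσ : SigmaRQ r q σ) (k : ℕ)
    (hk : k + 1 ≤ q)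
    (ih : morse σ (2*r+1 + (2*r+2)*k) = Wval r q k (2*r+1)) :
    morse σ (0 + (2*r+2)*(k+1)) = Wval r q (k+1) 0 := by
  have hs := morse_succ σ (2*r+1 + (2*r+2)*k) (by omega)
  have e : 0 + (2*r+2)*(k+1) = 2*r+1 + (2*r+2)*k + 1 := by ring
  rw [e, hs, symm_even hσ 0 (k+1) _ (by omega) hk (by omega) (by ring),
    symm_odd hσ r k (2*r+1 + (2*r+2)*k) le_rfl (by omega) rfl,
    Even.neg_one_pow ⟨r + 1 + (r+1)*k, by ring⟩, ih, one_mul]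
  have e2 : 2*(((q:ℤ)+1)*(r-((0:ℕ):ℤ))+(q-((k+1:ℕ):ℤ))+1) - (2*(((q:ℤ)+1)*r+k)+1)
      = 2*((q:ℤ)-2*k)-1 := by push_cast; ring
  rw [e2]
  have hsg : Int.sign (2*((q:ℤ)-2*k)-1) = if 2*k < q then 1 else -1 := by
    split_ifs with h
    · exact Int.sign_eq_one_of_pos (by omega)
    · exact Int.sign_eq_neg_one_of_neg (by omega)
  rw [hsg]
  unfold Wval
  push_cast
  split_ifs <;> omega

lemma row {r q : ℕ} {σ : Equiv.Perm ℕ} (hσ : SigmaRQ r q σ) (k n0 : ℕ)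
    (hk : k ≤ q) (h1 : 1 ≤ n0 + (2*r+2)*k)
    (ih : morse σ (n0 + (2*r+2)*k) = Wval r q k n0) (n : ℕ) (hn : n0 ≤ n) :
    n ≤ 2*r+1 → morse σ (n + (2*r+2)*k) = Wval r q k n := by
  induction n, hn using Nat.le_induction with
  | base => intro _; exact ih
  | succ n hn ih' =>
    intro h
    exact step_in hσ k n hk (by omega) (by omega) (ih' (by omega))

lemma closed {r q : ℕ} {σ : Equiv.Perm ℕ} (hσ : SigmaRQ r q σ) (k : ℕ) :
    k ≤ q → ∀ n, n ≤ 2*r+1 → 1 ≤ n + (2*r+2)*k →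
      morse σ (n + (2*r+2)*k) = Wval r q k n := by
  induction k with
  | zero =>
    intro hk n hn h1
    refine row hσ 0 1 hk (by omega) ?_ n (by omega) hn
    simp [Wval, morse]
  | succ k ih =>
    intro hk n hn h1
    refine row hσ (k+1) 0 hk ?_ (step_wrap hσ k hk
      (ih (by omega) _ le_rfl (by omega))) n (by omega) hn
    have : 0 < (2*r+2)*(k+1) := by positivity
    omega

/-- Symmetric model of the Morse counts. -/
def Model (r q i : ℕ) : Finset (ℕ × ℕ × ℕ) :=
  (Finset.range (r+1) ×ˢ Finset.range (q+1) ×ˢ Finset.range 2).filter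
    (fun x => x.1 + x.2.1 = i + x.2.2)

def Grid (r q i : ℕ) : Finset (ℕ × ℕ) :=
  (Finset.range (2*r+2) ×ˢ Finset.range (q+1)).filter
    (fun x => Wval r q x.2 x.1 = i)

lemma count_grid {r q : ℕ} {σ : Equiv.Perm ℕ} (hσ : SigmaRQ r q σ) (i : ℕ) :
    morseCount (2*(r+1)*(q+1)-1) σ i = (Grid r q i).card := by
  unfold morseCount
  symm
  apply Finset.card_bij (fun x _ => x.1 + (2*r+2)*x.2)
  · rintro ⟨n, k⟩ h
    simp only [Grid, Finset.mem_filter, Finset.mem_product, Finset.mem_range] at h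
    obtain ⟨⟨hn, hk⟩, hw⟩ := h
    have hpos : 1 ≤ n + (2*r+2)*k := by
      by_contra hc
      have hn0 : n = 0 := by omega
      have hk0 : k = 0 := by
        rcases Nat.eq_zero_or_pos k with h | h
        · exact h
        · have : 0 < (2*r+2)*k := by positivity
          omega
      subst hn0; subst hk0
      simp [Wval] at hw
      omega
    simp only [Finset.mem_filter, Finset.mem_Icc]
    refine ⟨⟨hpos, ?_⟩, ?_⟩
    · have h2 : (2*r+2)*k ≤ (2*r+2)*q := Nat.mul_le_mul_left _ (by omega)
      have e : 2*(r+1)*(q+1) = (2*r+2)*q + (2*r+2) := by ring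
      omega
    · rw [closed hσ k (by omega) n (by omega) hpos, hw]
  · rintro ⟨n, k⟩ h ⟨n', k'⟩ h' heq
    simp only [Grid, Finset.mem_filter, Finset.mem_product, Finset.mem_range] at h h'
    simp only at heq
    have a1 : (n + (2*r+2)*k) % (2*r+2) = n := by
      rw [Nat.add_mul_mod_self_left, Nat.mod_eq_of_lt h.1.1]
    have a2 : (n' + (2*r+2)*k') % (2*r+2) = n' := by
      rw [Nat.add_mul_mod_self_left, Nat.mod_eq_of_lt h'.1.1]
    have hn : n = n' := by rw [← a1, heq, a2]
    subst hn
    have : (2*r+2)*k = (2*r+2)*k' := by omega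
    have := Nat.eq_of_mul_eq_mul_left (by omega) this
    rw [this]
  · intro p hp
    simp only [Finset.mem_filter, Finset.mem_Icc] at hp
    obtain ⟨⟨h1, h2⟩, h3⟩ := hp
    have e := Nat.mod_add_div p (2*r+2)
    have hn : p % (2*r+2) < 2*r+2 := Nat.mod_lt _ (by omega)
    have hk : p / (2*r+2) < q+1 := by
      rw [Nat.div_lt_iff_lt_mul (by omega)]
      have e : 2*(r+1)*(q+1) = (q+1)*(2*r+2) := by ring
      omega
    refine ⟨(p % (2*r+2), p / (2*r+2)), ?_, e⟩
    simp only [Grid, Finset.mem_filter, Finset.mem_product, Finset.mem_range]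
    refine ⟨⟨hn, hk⟩, ?_⟩
    rw [← closed hσ _ (by omega) _ (by omega) (by omega), e, h3]

lemma mem_grid (r q i n k : ℕ) :
    (n, k) ∈ Grid r q i ↔ (n < 2*r+2 ∧ k < q+1) ∧ Wval r q k n = i := by
  simp only [Grid, Finset.mem_filter, Finset.mem_product, Finset.mem_range]

lemma mem_model (r q i j m t : ℕ) :
    (j, m, t) ∈ Model r q i ↔ (j < r+1 ∧ m < q+1 ∧ t < 2) ∧ j + m = i + t := by
  simp only [Model, Finset.mem_filter, Finset.mem_product, Finset.mem_range]

lemma grid_model (r q i : ℕ) : (Grid r q i).card = (Model r q i).card := by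
  apply Finset.card_nbij'
    (fun x => (if x.1 ≤ r then x.1 else 2*r+1-x.1,
      if 2*x.2 ≤ q then 2*x.2 else 2*(q-x.2)+1,
      if 2*x.2 ≤ q then (if x.1 ≤ r then 1 else 0) else (if x.1 ≤ r then 0 else 1)))
    (fun y => (if y.2.1 % 2 = 0 then (if y.2.2 = 1 then y.1 else 2*r+1-y.1)
        else (if y.2.2 = 0 then y.1 else 2*r+1-y.1),
      if y.2.1 % 2 = 0 then y.2.1/2 else q - y.2.1/2))
  · rintro ⟨n, k⟩ h
    simp only [Finset.mem_coe, mem_grid, mem_model, Wval] at h ⊢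
    split_ifs at h ⊢ <;> omega
  · rintro ⟨j, m, t⟩ h
    simp only [Finset.mem_coe, mem_grid, mem_model, Wval] at h ⊢
    split_ifs <;> omega
  · rintro ⟨n, k⟩ h
    simp only [Finset.mem_coe, mem_grid, Prod.mk.injEq] at h ⊢
    by_cases h1 : 2*k ≤ q <;> by_cases h2 : n ≤ r <;>
      simp only [h1, h2, if_true, if_false] <;> split_ifs <;> first | contradiction | omega
  · rintro ⟨j, m, t⟩ h
    simp only [Finset.mem_coe, mem_model, Prod.mk.injEq] at h ⊢
    split_ifs <;> omega

lemma model_symm (r q i : ℕ) : (Model r q i).card = (Model q r i).card := by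
  apply Finset.card_nbij' (fun x => (x.2.1, x.1, x.2.2)) (fun x => (x.2.1, x.1, x.2.2))
  · rintro ⟨j, m, t⟩ h
    simp only [Model, Finset.mem_coe, Finset.mem_filter, Finset.mem_product,
      Finset.mem_range] at h ⊢
    omega
  · rintro ⟨j, m, t⟩ h
    simp only [Model, Finset.mem_coe, Finset.mem_filter, Finset.mem_product,
      Finset.mem_range] at h ⊢
    omega
  · rintro ⟨j, m, t⟩ h; rfl
  · rintro ⟨j, m, t⟩ h; rfl

lemma model_rev (r q i : ℕ) (hi : i < r + q) :
    (Model r q i).card = (Model r q (r+q-1-i)).card := by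
  apply Finset.card_nbij' (fun x => (r-x.1, q-x.2.1, 1-x.2.2))
    (fun x => (r-x.1, q-x.2.1, 1-x.2.2)) <;>
  · rintro ⟨j, m, t⟩ h
    simp only [Model, Finset.mem_coe, Finset.mem_filter, Finset.mem_product,
      Finset.mem_range, Prod.mk.injEq] at h ⊢
    omega

/-- symmetry of the Morse counts: `μ_{rq} = μ_{qr}`, and
`μ_{rq}(i) = μ_{rq}(r+q-1-i)` for `0 ≤ i < r+q`. -/
theorem stmt_3 (r q : ℕ) (hr : 1 ≤ r) (hq : 1 ≤ q) (hrq : 1 < r*q)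
    (σ σ' : Equiv.Perm ℕ) (hσ : SigmaRQ r q σ) (hσ' : SigmaRQ q r σ') :
    (∀ i : ℕ, morseCount (2*(r+1)*(q+1)-1) σ i
      = morseCount (2*(r+1)*(q+1)-1) σ' i) ∧
    (∀ i : ℕ, i < r+q → morseCount (2*(r+1)*(q+1)-1) σ i
      = morseCount (2*(r+1)*(q+1)-1) σ (((r+q-1-i : ℕ) : ℤ))) := by
  have e : 2*(r+1)*(q+1)-1 = 2*(q+1)*(r+1)-1 := by
    congr 1; ring
  refine ⟨fun i => ?_, fun i hi => ?_⟩
  · rw [count_grid hσ, e, count_grid hσ', grid_model, grid_model, model_symm]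
  · rw [count_grid hσ, count_grid hσ, grid_model, grid_model, model_rev r q i hi]
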